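/- Suppose the speed function V is Lipschitz continuous and satisfies 0 < V_min ≤ V(c) ≤ V_max for all c ≥ 0, and suppose that for every F ∈ 𝒫_{m,G} and every (t_d, x) ∈ 𝒯_d × 𝒳 the value x + z_F(t_d) lies in the range of z_F (i.e. all trips complete within the horizon 𝒯). Define the travel time T_F(t_d, x) := z_F^{−1}(x + z_F(t_d)) − t_d and the cost J(t_d; x, t_a; F) := α·T_F(t_d, x) + β·max(t_a − t_d − T_F(t_d, x), 0) + γ·max(t_d + T_F(t_d, x) − t_a, 0), with constants α, β, γ > 0. Then J is jointly continuous on 𝒯_d × 𝒳 × 𝒯_a × 𝒫_{m,G}, where 𝒫_{m,G} carries the weak convergence topology; moreover, for each fixed F ∈ 𝒫_{m,G}, the map (t_d, x, t_a) ↦ J(t_d; x, t_a; F) is Lipschitz continuous on 𝒯_d × 𝒳 × 𝒯_a, with a Lipschitz constant independent of F. -/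

import Mathlib

open MeasureTheory Set Filter

noncomputable section

/-- `Sset Td Xs z t` is the set `S_t(z)` of pairs (departure time, trip length) of the
agents travelling at time `t` in a system with characteristic travel distance `z`:
`S_t(z) = {(τ, ξ) : τ ∈ [0,t] ∩ 𝒯_d, ξ ∈ (z(t) − z(τ), ∞) ∩ 𝒳}`. -/
def Sset (Td Xs : Set ℝ) (z : ℝ → ℝ) (t : ℝ) : Set (ℝ × ℝ) :=
  {p : ℝ × ℝ | p.1 ∈ Set.Icc 0 t ∩ Td ∧ p.2 ∈ Set.Ioi (z t - z p.1) ∩ Xs}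

/-- `memP Td Xs Ta m G F` says that `F ∈ 𝒫_{m,G}`: `F` is a Borel probability measure
on `𝒯_d × 𝒳` with `F(B) ≤ G·λ₂(B)` for every Borel `B` and whose `𝒳`-marginal agrees
with that of the demand profile `m`, i.e. `F(𝒯_d × Q) = m(Q × 𝒯_a)` for all Borel `Q`. -/
def memP (Td Xs Ta : Set ℝ) (m : Measure (ℝ × ℝ)) (G : ℝ) (F : Measure (ℝ × ℝ)) : Prop :=
  IsProbabilityMeasure F ∧ F ((Td ×ˢ Xs)ᶜ) = 0 ∧
    (∀ B : Set (ℝ × ℝ), MeasurableSet B → F B ≤ ENNReal.ofReal G * volume B) ∧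
    ∀ Q : Set ℝ, MeasurableSet Q → F (Td ×ˢ Q) = m (Q ×ˢ Ta)

/-- The map `𝒰(z, F)(t) = ∫₀ᵗ V(F(S_s(z))) ds`. -/
def Umap (Td Xs : Set ℝ) (V : ℝ → ℝ) (F : Measure (ℝ × ℝ)) (z : ℝ → ℝ) (t : ℝ) : ℝ :=
  ∫ s in (0:ℝ)..t, V ((F (Sset Td Xs z s)).toReal)

/-- The distance associated with the norm `‖u‖_M = sup_{t ∈ [0,Tmax]} e^{−Mt}|u(t)|`. -/
def dM (M Tmax : ℝ) (u w : ℝ → ℝ) : ℝ :=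
  ⨆ t : Set.Icc (0:ℝ) Tmax, Real.exp (-(M * t.1)) * |u t.1 - w t.1|

/-!
The density bound `F ≤ G·λ₂` makes the load `F(S_t(z))` Lipschitz in `z`. Up to an `F`-null set,
`S_t(z)` is the region above the graph of `τ ↦ z(t) - z(τ)` over `[0, t]`, whose boundary is
Lebesgue null, so by the portmanteau theorem the load is weakly continuous in `F` for fixed `z`.
Hence Grönwall's inequality bounds `|z_F - z_{F₀}|` by a multiple of the `L¹` distance between the
loads of `F` and `F₀` along the fixed trajectory `z_{F₀}`, which tends to `0` as `F → F₀` by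
dominated convergence.

The arrival time `e` solves `z_F(e) = x + z_F(t_d)`, and `z_F` grows at a rate between `V_min` and
`V_max`. So `e` is Lipschitz in `(t_d, x)` uniformly in `F`, and continuous in `F`; the cost
inherits both properties, and together they give joint continuity.
-/

open scoped Topology NNReal ENNReal symmDiff

section StrictEpigraph

/-- The part of the strict epigraph of `f` lying over `A`. For `A = [0, t]` and
`f τ = z t - z τ` it is the set `S_t(z)` of the paper without the constraints `τ ∈ 𝒯_d` and
`ξ ∈ 𝒳`, which hold almost surely under every admissible `F`. -/
def strictEpigraph {X : Type*} (A : Set X) (f : X → ℝ) : Set (X × ℝ) :=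
  {p | p.1 ∈ A ∧ f p.1 < p.2}

variable {X : Type*} [MeasurableSpace X] {A : Set X} {f g : X → ℝ}

lemma measurableSet_strictEpigraph (hA : MeasurableSet A) (hf : Measurable f) :
    MeasurableSet (strictEpigraph A f) :=
  (measurable_fst hA).inter (measurableSet_lt (hf.comp measurable_fst) measurable_snd)

lemma prod_volume_symmDiff_strictEpigraph {μ : Measure X} (hA : MeasurableSet A)
    (hf : Measurable f) (hg : Measurable g) :
    μ.prod volume (strictEpigraph A f ∆ strictEpigraph A g) =
      ∫⁻ x in A, ENNReal.ofReal |f x - g x| ∂μ := by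
  have hmeas := (measurableSet_strictEpigraph hA hf).symmDiff (measurableSet_strictEpigraph hA hg)
  rw [Measure.prod_apply hmeas, ← lintegral_indicator hA]
  congr 1 with x
  by_cases hx : x ∈ A
  · have hslice : Prod.mk x ⁻¹' (strictEpigraph A f ∆ strictEpigraph A g) = uIoc (g x) (f x) := by
      ext ξ
      simp [strictEpigraph, mem_symmDiff, hx, mem_uIoc, or_comm]
    rw [hslice, Real.volume_uIoc, indicator_of_mem hx]
  · simp [strictEpigraph, symmDiff_def, hx]

lemma prod_volume_frontier_strictEpigraph [TopologicalSpace X] [OpensMeasurableSpace X]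
    {μ : Measure X} (hA : μ (frontier A) = 0) (hf : Continuous f) :
    μ.prod volume (frontier (strictEpigraph A f)) = 0 := by
  have hgraph : μ.prod volume {p : X × ℝ | f p.1 = p.2} = 0 := by
    rw [Measure.measure_prod_null (measurableSet_eq_fun (by fun_prop) measurable_snd)]
    exact .of_forall fun x => by simp
  have hside : μ.prod volume (Prod.fst ⁻¹' frontier A : Set (X × ℝ)) = 0 := by
    rw [← prod_univ, Measure.prod_prod, hA, zero_mul]
  refine measure_mono_null (fun p hp => ?_) (measure_union_null hside hgraph)
  rcases frontier_inter_subset (Prod.fst ⁻¹' A) {p : X × ℝ | f p.1 < p.2} hp with h | h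
  · exact .inl (continuous_fst.frontier_preimage_subset A h.1)
  · exact .inr (frontier_lt_subset_eq (by fun_prop) continuous_snd h.2)

end StrictEpigraph

section ImplicitFunctions

variable {X Y Z : Type*} {C K : ℝ≥0} {s : Set Y}

lemma lipschitzOnWith_of_antilipschitzWith_of_apply_eq [PseudoEMetricSpace X]
    [PseudoEMetricSpace Y] [PseudoEMetricSpace Z] {t : Set X} {φ : Y → Z} {e : X → Y} {y : X → Z}
    (hφ : AntilipschitzWith C (s.domRestrict φ)) (hy : LipschitzOnWith K y t) (hes : MapsTo e t s)
    (he : ∀ x ∈ t, φ (e x) = y x) : LipschitzOnWith (C * K) e t := fun a ha b hb =>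
  calc edist (e a) (e b)
    _ ≤ C * edist (φ (e a)) (φ (e b)) := hφ ⟨e a, hes ha⟩ ⟨e b, hes hb⟩
    _ = C * edist (y a) (y b) := by rw [he a ha, he b hb]
    _ ≤ C * (K * edist a b) := by gcongr; exact hy ha hb
    _ = ↑(C * K) * edist a b := by rw [ENNReal.coe_mul, mul_assoc]

lemma continuousOn_of_antilipschitzWith_of_apply_eq [TopologicalSpace X] [PseudoMetricSpace Y]
    [PseudoMetricSpace Z] {t : Set X} {φ : X → Y → Z} {e : X → Y} {y : X → Z}
    (hφ : ∀ x ∈ t, AntilipschitzWith C (s.domRestrict (φ x)))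
    (hφc : ∀ a ∈ s, ContinuousOn (fun x => φ x a) t) (hy : ContinuousOn y t)
    (hes : MapsTo e t s) (he : ∀ x ∈ t, φ x (e x) = y x) : ContinuousOn e t := by
  intro x₀ hx₀
  have hbound : ∀ x ∈ t, dist (e x) (e x₀) ≤ C * dist (y x) (φ x (e x₀)) := fun x hx => by
    rw [← he x hx]
    exact (hφ x hx).le_mul_dist ⟨e x, hes hx⟩ ⟨e x₀, hes hx₀⟩
  have hlim : Tendsto (fun x => C * dist (y x) (φ x (e x₀))) (𝓝[t] x₀) (𝓝 0) := by
    simpa [he x₀ hx₀] using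
      (Tendsto.dist (hy x₀ hx₀) (hφc (e x₀) (hes hx₀) x₀ hx₀)).const_mul (C : ℝ)
  rw [ContinuousWithinAt, tendsto_iff_dist_tendsto_zero]
  exact squeeze_zero' (.of_forall fun _ => dist_nonneg)
    (eventually_nhdsWithin_of_forall hbound) hlim

end ImplicitFunctions

lemma le_mul_exp_of_le_add_mul_integral {h : ℝ → ℝ} {a b C ε : ℝ} (hc : Continuous h)
    (hC : 0 ≤ C) (hh : ∀ t ∈ Icc a b, h t ≤ ε + C * ∫ s in a..t, h s) {t : ℝ}
    (ht : t ∈ Icc a b) : h t ≤ ε * Real.exp (C * (t - a)) := by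
  set H : ℝ → ℝ := fun t => ε + C * ∫ s in a..t, h s
  have hderiv : ∀ x, HasDerivAt H (C * h x) x := fun x =>
    ((hc.integral_hasStrictDerivAt a x).hasDerivAt.const_mul C).const_add ε
  have hgronwall : H t ≤ gronwallBound ε C 0 (t - a) :=
    le_gronwallBound_of_liminf_deriv_right_le (f' := fun x => C * h x)
      (fun x _ => (hderiv x).continuousAt.continuousWithinAt)
      (fun x _ r hr => by
        simpa [slope_def_field, div_eq_inv_mul] using
          (hderiv x).hasDerivWithinAt.liminf_right_slope_le hr)
      (by simp [H])
      (fun x hx => by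
        rw [add_zero]
        exact mul_le_mul_of_nonneg_left (hh x ⟨hx.1, hx.2.le⟩) hC) t ht
  rw [gronwallBound_ε0] at hgronwall
  exact (hh t ht).trans hgronwall

section TrafficLoad

/-- The mass `F(S_t(z))` travelling at time `t`, for `F` concentrated on `𝒯_d × 𝒳`. -/
def trafficLoad (F : Measure (ℝ × ℝ)) (z : ℝ → ℝ) (t : ℝ) : ℝ :=
  F.real (strictEpigraph (Icc 0 t) fun τ => z t - z τ)

variable {F : Measure (ℝ × ℝ)} {z w : ℝ → ℝ}

lemma toReal_measure_Sset {Td Xs : Set ℝ} (hF : F (Td ×ˢ Xs)ᶜ = 0) (z : ℝ → ℝ) (t : ℝ) :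
    (F (Sset Td Xs z t)).toReal = trafficLoad F z t := by
  refine congrArg ENNReal.toReal (measure_congr ?_)
  filter_upwards [measure_eq_zero_iff_ae_notMem.1 hF] with p hp
  obtain ⟨hpd, hpx⟩ : p ∈ Td ×ˢ Xs := not_not.1 hp
  exact propext ⟨fun h => ⟨h.1.1, h.2.1⟩, fun h => ⟨⟨h.1, hpd⟩, h.2, hpx⟩⟩

lemma trafficLoad_mem_Icc [IsProbabilityMeasure F] (z : ℝ → ℝ) (t : ℝ) :
    trafficLoad F z t ∈ Icc 0 1 :=
  ⟨measureReal_nonneg, measureReal_le_one⟩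

lemma measurable_trafficLoad [SFinite F] (hz : Measurable z) : Measurable (trafficLoad F z) := by
  have hmeas : MeasurableSet ({q : ℝ × ℝ × ℝ | 0 ≤ q.2.1} ∩ {q | q.2.1 ≤ q.1} ∩
      {q | z q.1 - z q.2.1 < q.2.2}) :=
    ((measurableSet_le (by fun_prop) (by fun_prop)).inter
      (measurableSet_le (by fun_prop) (by fun_prop))).inter
      (measurableSet_lt (by fun_prop) (by fun_prop))
  exact (measurable_measure_prodMk_left hmeas).ennreal_toReal

lemma abs_trafficLoad_sub_le [IsFiniteMeasure F] {G : ℝ≥0} (hF : F ≤ G • volume)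
    (hz : Continuous z) (hw : Continuous w) {t : ℝ} (ht : 0 ≤ t) :
    |trafficLoad F z t - trafficLoad F w t| ≤
      G * (t * |z t - w t| + ∫ τ in 0..t, |z τ - w τ|) := by
  set f : ℝ → ℝ := fun τ => z t - z τ
  set g : ℝ → ℝ := fun τ => w t - w τ
  have hf : Continuous f := by fun_prop
  have hg : Continuous g := by fun_prop
  have hvol : volume (strictEpigraph (Icc 0 t) f ∆ strictEpigraph (Icc 0 t) g) =
      ENNReal.ofReal (∫ τ in 0..t, |f τ - g τ|) := by
    rw [Measure.volume_eq_prod,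
      prod_volume_symmDiff_strictEpigraph measurableSet_Icc hf.measurable hg.measurable,
      ← ofReal_integral_eq_lintegral_ofReal (Continuous.integrableOn_Icc (by fun_prop))
        (.of_forall fun τ => abs_nonneg _),
      integral_Icc_eq_integral_Ioc, ← intervalIntegral.integral_of_le ht]
  have hmass : F.real (strictEpigraph (Icc 0 t) f ∆ strictEpigraph (Icc 0 t) g) ≤
      G * ∫ τ in 0..t, |f τ - g τ| := by
    have hnonneg : 0 ≤ ∫ τ in 0..t, |f τ - g τ| :=
      intervalIntegral.integral_nonneg ht fun _ _ => abs_nonneg _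
    refine ENNReal.toReal_le_of_le_ofReal (by positivity) ((hF _).trans_eq ?_)
    rw [Measure.smul_apply, hvol, ENNReal.smul_def, smul_eq_mul, ENNReal.ofReal_mul G.coe_nonneg,
      ENNReal.ofReal_coe_nnreal]
  calc |trafficLoad F z t - trafficLoad F w t|
    _ ≤ F.real (strictEpigraph (Icc 0 t) f ∆ strictEpigraph (Icc 0 t) g) :=
        abs_measureReal_sub_le_measureReal_symmDiff
          (measurableSet_strictEpigraph measurableSet_Icc hf.measurable).nullMeasurableSet
          (measurableSet_strictEpigraph measurableSet_Icc hg.measurable).nullMeasurableSet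
    _ ≤ G * ∫ τ in 0..t, |f τ - g τ| := hmass
    _ ≤ G * ∫ τ in 0..t, (|z t - w t| + |z τ - w τ|) := by
        gcongr
        refine intervalIntegral.integral_mono_on ht
          (Continuous.intervalIntegrable (by fun_prop) _ _)
          (Continuous.intervalIntegrable (by fun_prop) _ _) fun τ _ => ?_
        rw [sub_sub_sub_comm]
        exact abs_sub _ _
    _ = G * (t * |z t - w t| + ∫ τ in 0..t, |z τ - w τ|) := by
        rw [intervalIntegral.integral_add intervalIntegrable_const
          (Continuous.intervalIntegrable (by fun_prop) _ _)]
        simp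

lemma abs_speed_trafficLoad_sub_le {F₀ : Measure (ℝ × ℝ)} [IsProbabilityMeasure F]
    [IsProbabilityMeasure F₀] {V : ℝ → ℝ} {G L : ℝ≥0} (hV : LipschitzOnWith L V (Icc 0 1))
    (hF : F ≤ G • volume) (hz : Continuous z) (hw : Continuous w) {t : ℝ} (ht : 0 ≤ t) :
    |V (trafficLoad F z t) - V (trafficLoad F₀ w t)| ≤
      L * (G * (t * |z t - w t| + ∫ τ in 0..t, |z τ - w τ|) +
        |trafficLoad F w t - trafficLoad F₀ w t|) :=
  calc |V (trafficLoad F z t) - V (trafficLoad F₀ w t)|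
    _ ≤ L * |trafficLoad F z t - trafficLoad F₀ w t| :=
        hV.dist_le_mul _ (trafficLoad_mem_Icc z t) _ (trafficLoad_mem_Icc w t)
    _ ≤ L * (|trafficLoad F z t - trafficLoad F w t| +
          |trafficLoad F w t - trafficLoad F₀ w t|) := by
        gcongr
        exact abs_sub_le _ _ _
    _ ≤ _ := by
        gcongr
        exact abs_trafficLoad_sub_le hF hz hw ht

lemma continuousAt_trafficLoad {F : ProbabilityMeasure (ℝ × ℝ)}
    (hF : (F : Measure (ℝ × ℝ)) ≪ volume) (hz : Continuous z) (t : ℝ) :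
    ContinuousAt (fun P : ProbabilityMeasure (ℝ × ℝ) => trafficLoad P z t) F := by
  have hIcc : volume (frontier (Icc 0 t)) = 0 := (convex_Icc 0 t).addHaar_frontier volume
  have hnull := hF (prod_volume_frontier_strictEpigraph hIcc
    (show Continuous fun τ => z t - z τ by fun_prop))
  exact (ENNReal.tendsto_toReal (measure_ne_top _ _)).comp
    (ProbabilityMeasure.tendsto_measure_of_null_frontier_of_tendsto' tendsto_id hnull)

lemma tendsto_integral_abs_trafficLoad_sub {F : ProbabilityMeasure (ℝ × ℝ)}
    (hF : (F : Measure (ℝ × ℝ)) ≪ volume) (hz : Continuous z) (a b : ℝ) :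
    Tendsto (fun P : ProbabilityMeasure (ℝ × ℝ) =>
      ∫ s in a..b, |trafficLoad P z s - trafficLoad F z s|) (𝓝 F) (𝓝 0) := by
  rw [← intervalIntegral.integral_zero (a := a) (b := b) (μ := volume) (E := ℝ)]
  refine intervalIntegral.tendsto_integral_filter_of_dominated_convergence (fun _ => 1)
    (.of_forall fun P => ?_) (.of_forall fun P => .of_forall fun s _ => ?_)
    intervalIntegrable_const (.of_forall fun s _ => ?_)
  · exact ((measurable_trafficLoad hz.measurable).sub
      (measurable_trafficLoad hz.measurable)).abs.aestronglyMeasurable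
  · rw [Real.norm_eq_abs, abs_abs]
    exact abs_sub_le_of_nonneg_of_le measureReal_nonneg measureReal_le_one
      measureReal_nonneg measureReal_le_one
  · have h := ((continuousAt_trafficLoad hF hz s).tendsto.sub_const (trafficLoad F z s)).abs
    rwa [sub_self, abs_zero] at h

lemma intervalIntegrable_speed_trafficLoad [IsProbabilityMeasure F] {V : ℝ → ℝ}
    (hV : ContinuousOn V (Icc 0 1)) (hz : Measurable z) (a b : ℝ) :
    IntervalIntegrable (fun s => V (trafficLoad F z s)) volume a b := by
  obtain ⟨M, hM⟩ := isCompact_Icc.exists_bound_of_continuousOn hV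
  have hmeas : Measurable fun s => V (trafficLoad F z s) := by
    convert (hV.domRestrict.Icc_extend' (h := zero_le_one)).measurable.comp
      (measurable_trafficLoad (F := F) hz) using 2 with s
    exact (IccExtend_of_mem zero_le_one ((Icc 0 1).domRestrict V) (trafficLoad_mem_Icc z s)).symm
  exact (intervalIntegrable_const (c := M)).mono_fun' hmeas.aestronglyMeasurable
    (.of_forall fun s => hM _ (trafficLoad_mem_Icc z s))

end TrafficLoad

/-- `z` is a characteristic travel distance on `[0, T]` for the demand `F`, i.e.
`z(t) = ∫₀ᵗ V(F(S_s(z))) ds`, provided `F` is concentrated on `𝒯_d × 𝒳`. -/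
structure IsTravelDistance (V : ℝ → ℝ) (T : ℝ) (F : Measure (ℝ × ℝ)) (z : ℝ → ℝ) : Prop where
  continuous : Continuous z
  eq_integral : ∀ t ∈ Icc 0 T, z t = ∫ s in 0..t, V (trafficLoad F z s)

lemma isTravelDistance_of_eq_Umap {Td Xs : Set ℝ} {V z : ℝ → ℝ} {T : ℝ} {F : Measure (ℝ × ℝ)}
    (hF : F (Td ×ˢ Xs)ᶜ = 0) (hz : Continuous z)
    (hfix : ∀ t ∈ Icc 0 T, z t = Umap Td Xs V F z t) : IsTravelDistance V T F z where
  continuous := hz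
  eq_integral t ht := by simpa only [Umap, toReal_measure_Sset hF] using hfix t ht

namespace IsTravelDistance

variable {V z w : ℝ → ℝ} {T : ℝ} {F F₀ : Measure (ℝ × ℝ)}
  [IsProbabilityMeasure F] [IsProbabilityMeasure F₀]

lemma sub_eq_integral (hz : IsTravelDistance V T F z) (hV : ContinuousOn V (Icc 0 1)) {s t : ℝ}
    (hs : s ∈ Icc 0 T) (ht : t ∈ Icc 0 T) :
    z t - z s = ∫ r in s..t, V (trafficLoad F z r) := by
  have hint := intervalIntegrable_speed_trafficLoad (F := F) hV hz.continuous.measurable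
  rw [hz.eq_integral t ht, hz.eq_integral s hs,
    intervalIntegral.integral_interval_sub_left (hint 0 t) (hint 0 s)]

lemma lipschitzOnWith (hz : IsTravelDistance V T F z) (hV : ContinuousOn V (Icc 0 1)) {M : ℝ≥0}
    (hM : ∀ c ∈ Icc 0 1, ‖V c‖ ≤ M) : LipschitzOnWith M z (Icc 0 T) := by
  refine .of_dist_le_mul fun t ht s hs => ?_
  rw [Real.dist_eq, Real.dist_eq, hz.sub_eq_integral hV hs ht]
  exact intervalIntegral.norm_integral_le_of_norm_le_const
    fun r _ => hM _ (trafficLoad_mem_Icc z r)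

lemma antilipschitzWith (hz : IsTravelDistance V T F z) (hV : ContinuousOn V (Icc 0 1))
    {v : ℝ≥0} (hv : 0 < v) (hvV : ∀ c ∈ Icc 0 1, v ≤ V c) :
    AntilipschitzWith v⁻¹ ((Icc 0 T).domRestrict z) := by
  have hgrowth : ∀ s ∈ Icc 0 T, ∀ t ∈ Icc 0 T, s ≤ t → v * (t - s) ≤ z t - z s := by
    intro s hs t ht hst
    calc v * (t - s) = ∫ _ in s..t, (v : ℝ) := by
          rw [intervalIntegral.integral_const, smul_eq_mul, mul_comm]
      _ ≤ ∫ r in s..t, V (trafficLoad F z r) :=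
          intervalIntegral.integral_mono_on hst intervalIntegrable_const
            (intervalIntegrable_speed_trafficLoad hV hz.continuous.measurable s t)
            fun r _ => hvV _ (trafficLoad_mem_Icc z r)
      _ = z t - z s := (hz.sub_eq_integral hV hs ht).symm
  refine .of_le_mul_dist fun ⟨s, hs⟩ ⟨t, ht⟩ => ?_
  rw [NNReal.coe_inv, le_inv_mul_iff₀ (NNReal.coe_pos.2 hv)]
  change v * |s - t| ≤ |z s - z t|
  rcases le_total s t with hst | hst
  · rw [abs_sub_comm s, abs_sub_comm (z s), abs_of_nonneg (sub_nonneg.2 hst)]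
    exact (hgrowth s hs t ht hst).trans (le_abs_self _)
  · rw [abs_of_nonneg (sub_nonneg.2 hst)]
    exact (hgrowth t ht s hs hst).trans (le_abs_self _)

lemma abs_sub_le_integral_abs_speed_sub (hz : IsTravelDistance V T F z)
    (hw : IsTravelDistance V T F₀ w) (hV : ContinuousOn V (Icc 0 1)) {t : ℝ} (ht : t ∈ Icc 0 T) :
    |z t - w t| ≤ ∫ s in 0..t, |V (trafficLoad F z s) - V (trafficLoad F₀ w s)| := by
  rw [hz.eq_integral t ht, hw.eq_integral t ht, ← intervalIntegral.integral_sub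
    (intervalIntegrable_speed_trafficLoad hV hz.continuous.measurable 0 t)
    (intervalIntegrable_speed_trafficLoad hV hw.continuous.measurable 0 t)]
  exact intervalIntegral.abs_integral_le_integral_abs ht.1

section Stability

variable {G L : ℝ≥0}

lemma abs_sub_le_add_mul_integral (hz : IsTravelDistance V T F z)
    (hw : IsTravelDistance V T F₀ w) (hV : LipschitzOnWith L V (Icc 0 1)) (hF : F ≤ G • volume)
    {t : ℝ} (ht : t ∈ Icc 0 T) :
    |z t - w t| ≤ L * (∫ s in 0..T, |trafficLoad F w s - trafficLoad F₀ w s|) +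
      2 * L * G * T * ∫ s in 0..t, |z s - w s| := by
  have hzc := hz.continuous
  have hwc := hw.continuous
  set d : ℝ → ℝ := fun s => |z s - w s|
  set δ : ℝ → ℝ := fun s => |trafficLoad F w s - trafficLoad F₀ w s|
  set I : ℝ := ∫ s in 0..t, d s
  have hd : Continuous d := by fun_prop
  have hδ : ∀ a b, IntervalIntegrable δ volume a b := fun a b =>
    ((intervalIntegrable_speed_trafficLoad continuousOn_id hwc.measurable a b).sub
      (intervalIntegrable_speed_trafficLoad continuousOn_id hwc.measurable a b)).abs
  have hI : 0 ≤ I := intervalIntegral.integral_nonneg ht.1 fun _ _ => abs_nonneg _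
  have hspeed : ∀ s ∈ Icc 0 t, |V (trafficLoad F z s) - V (trafficLoad F₀ w s)| ≤
      L * (G * (T * d s + I) + δ s) := by
    intro s hs
    refine (abs_speed_trafficLoad_sub_le hV hF hzc hwc hs.1).trans ?_
    gcongr
    · exact hs.2.trans ht.2
    · exact intervalIntegral.integral_mono_interval le_rfl hs.1 hs.2
        (.of_forall fun _ => abs_nonneg _) (hd.intervalIntegrable 0 t)
  have hzint := intervalIntegrable_speed_trafficLoad (F := F) hV.continuousOn hzc.measurable 0 t
  have hwint := intervalIntegrable_speed_trafficLoad (F := F₀) hV.continuousOn hwc.measurable 0 t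
  have hdint : IntervalIntegrable (fun s => G * (T * d s + I)) volume 0 t :=
    Continuous.intervalIntegrable (by fun_prop) 0 t
  calc |z t - w t|
    _ ≤ ∫ s in 0..t, |V (trafficLoad F z s) - V (trafficLoad F₀ w s)| :=
        hz.abs_sub_le_integral_abs_speed_sub hw hV.continuousOn ht
    _ ≤ ∫ s in 0..t, L * (G * (T * d s + I) + δ s) :=
        intervalIntegral.integral_mono_on ht.1 (hzint.sub hwint).abs
          ((hdint.add (hδ 0 t)).const_mul _) hspeed
    _ = L * (G * (T * I + t * I) + ∫ s in 0..t, δ s) := by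
        rw [intervalIntegral.integral_const_mul, intervalIntegral.integral_add hdint (hδ 0 t),
          intervalIntegral.integral_const_mul,
          intervalIntegral.integral_add ((hd.intervalIntegrable 0 t).const_mul T)
            intervalIntegrable_const, intervalIntegral.integral_const_mul]
        simp [I]
    _ ≤ L * (G * (T * I + T * I) + ∫ s in 0..T, δ s) := by
        gcongr
        · exact ht.2
        · exact intervalIntegral.integral_mono_interval le_rfl ht.1 ht.2
            (.of_forall fun _ => abs_nonneg _) (hδ 0 T)
    _ = L * (∫ s in 0..T, δ s) + 2 * L * G * T * I := by ring

lemma abs_sub_le_mul_exp (hz : IsTravelDistance V T F z) (hw : IsTravelDistance V T F₀ w)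
    (hV : LipschitzOnWith L V (Icc 0 1)) (hF : F ≤ G • volume) {t : ℝ} (ht : t ∈ Icc 0 T) :
    |z t - w t| ≤ L * (∫ s in 0..T, |trafficLoad F w s - trafficLoad F₀ w s|) *
      Real.exp (2 * L * G * T * t) := by
  have hzc := hz.continuous
  have hwc := hw.continuous
  have hT : 0 ≤ T := ht.1.trans ht.2
  simpa using le_mul_exp_of_le_add_mul_integral (by fun_prop) (by positivity)
    (fun t ht => hz.abs_sub_le_add_mul_integral hw hV hF ht) ht

end Stability

end IsTravelDistance

lemma continuousOn_travelDistance {V : ℝ → ℝ} {T : ℝ} {G L : ℝ≥0}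
    {𝓕 : Set (ProbabilityMeasure (ℝ × ℝ))} {zsol : ProbabilityMeasure (ℝ × ℝ) → ℝ → ℝ}
    (hV : LipschitzOnWith L V (Icc 0 1))
    (h𝓕 : ∀ F ∈ 𝓕, (F : Measure (ℝ × ℝ)) ≤ G • volume)
    (hz : ∀ F ∈ 𝓕, IsTravelDistance V T F (zsol F)) {t : ℝ} (ht : t ∈ Icc 0 T) :
    ContinuousOn (fun F => zsol F t) 𝓕 := by
  intro F₀ hF₀
  have hac : (F₀ : Measure (ℝ × ℝ)) ≪ volume :=
    Measure.absolutelyContinuous_of_le_smul (c := (G : ℝ≥0∞)) (h𝓕 F₀ hF₀)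
  have hlim := (((tendsto_integral_abs_trafficLoad_sub hac (hz F₀ hF₀).continuous 0 T).const_mul
    (L : ℝ)).mul_const (Real.exp (2 * L * G * T * t))).mono_left
      (nhdsWithin_le_nhds (s := 𝓕))
  rw [mul_zero, zero_mul] at hlim
  rw [ContinuousWithinAt, tendsto_iff_dist_tendsto_zero]
  refine squeeze_zero' (.of_forall fun _ => dist_nonneg)
    (eventually_nhdsWithin_of_forall fun F hF => ?_) hlim
  exact (hz F hF).abs_sub_le_mul_exp (hz F₀ hF₀) hV (h𝓕 F hF) ht

section TravelTime

/-- `θ td x = T_F(td, x)` is a travel time in a system with characteristic travel distance `z`: a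
trip of length `x ∈ Xs` departing at `td ∈ Td` ends at `td + θ td x`, within the horizon
`[0, T]`. -/
def IsTravelTime (Td Xs : Set ℝ) (T : ℝ) (z : ℝ → ℝ) (θ : ℝ → ℝ → ℝ) : Prop :=
  ∀ td ∈ Td, ∀ x ∈ Xs, td + θ td x ∈ Icc 0 T ∧ z (td + θ td x) = x + z td

variable {Td Xs : Set ℝ} {T : ℝ} {C M : ℝ≥0}

lemma IsTravelTime.lipschitzOnWith {z : ℝ → ℝ} {θ : ℝ → ℝ → ℝ} (hθ : IsTravelTime Td Xs T z θ)
    (hTd : Td ⊆ Icc 0 T) (hz : AntilipschitzWith C ((Icc 0 T).domRestrict z))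
    (hzM : LipschitzOnWith M z (Icc 0 T)) :
    LipschitzOnWith (C * (1 + M) + 1) (fun q : ℝ × ℝ => θ q.1 q.2) (Td ×ˢ Xs) := by
  have hfst : LipschitzOnWith 1 (Prod.fst : ℝ × ℝ → ℝ) (Td ×ˢ Xs) :=
    LipschitzWith.prod_fst.lipschitzOnWith
  have hsum : LipschitzOnWith (1 + M) (fun q : ℝ × ℝ => q.2 + z q.1) (Td ×ˢ Xs) := by
    simpa using LipschitzWith.prod_snd.lipschitzOnWith.add
      (hzM.comp hfst fun q hq => hTd hq.1)
  have harrival : LipschitzOnWith (C * (1 + M)) (fun q : ℝ × ℝ => q.1 + θ q.1 q.2) (Td ×ˢ Xs) :=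
    lipschitzOnWith_of_antilipschitzWith_of_apply_eq hz hsum
      (fun q hq => (hθ q.1 hq.1 q.2 hq.2).1) fun q hq => (hθ q.1 hq.1 q.2 hq.2).2
  simpa using harrival.sub hfst

lemma continuousOn_travelTime {P : Type*} [TopologicalSpace P] {𝓕 : Set P} {zsol : P → ℝ → ℝ}
    {Tt : P → ℝ → ℝ → ℝ} (hTt : ∀ F ∈ 𝓕, IsTravelTime Td Xs T (zsol F) (Tt F))
    (hTd : Td ⊆ Icc 0 T) (hz : ∀ F ∈ 𝓕, AntilipschitzWith C ((Icc 0 T).domRestrict (zsol F)))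
    (hzc : ∀ t ∈ Icc 0 T, ContinuousOn (fun F => zsol F t) 𝓕) {td x : ℝ} (htd : td ∈ Td)
    (hx : x ∈ Xs) : ContinuousOn (fun F => Tt F td x) 𝓕 := by
  have harrival : ContinuousOn (fun F => td + Tt F td x) 𝓕 :=
    continuousOn_of_antilipschitzWith_of_apply_eq hz hzc
      (continuousOn_const.add (hzc td (hTd htd)))
      (fun F hF => (hTt F hF td htd x hx).1) fun F hF => (hTt F hF td htd x hx).2
  exact (harrival.sub continuousOn_const).congr fun F _ => (add_sub_cancel_left td _).symm

end TravelTime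

/-- The cost `J` of a trip departing at `td`, with desired arrival time `ta` and travel time
`θ`. -/
def tripCost (α β γ td ta θ : ℝ) : ℝ :=
  α * θ + β * max (ta - td - θ) 0 + γ * max (td + θ - ta) 0

lemma exists_lipschitzWith_tripCost (α β γ : ℝ) :
    ∃ K, LipschitzWith K fun p : (ℝ × ℝ × ℝ) × ℝ => tripCost α β γ p.1.1 p.1.2.2 p.2 := by
  have htd : LipschitzWith 1 fun p : (ℝ × ℝ × ℝ) × ℝ => p.1.1 := by
    simpa using! LipschitzWith.prod_fst.comp LipschitzWith.prod_fst
  have hta : LipschitzWith 1 fun p : (ℝ × ℝ × ℝ) × ℝ => p.1.2.2 := by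
    simpa using! LipschitzWith.prod_snd.comp (LipschitzWith.prod_snd.comp LipschitzWith.prod_fst)
  have hθ : LipschitzWith 1 fun p : (ℝ × ℝ × ℝ) × ℝ => p.2 := LipschitzWith.prod_snd
  exact ⟨_, (((lipschitzWith_smul α).comp hθ).add
    ((lipschitzWith_smul β).comp (((hta.sub htd).sub hθ).max_const 0))).add
    ((lipschitzWith_smul γ).comp (((htd.add hθ).sub hta).max_const 0))⟩

theorem cost_jointly_continuous_and_Lipschitz_general {T Vmin : ℝ} {G L : ℝ≥0} {Td Xs Ta : Set ℝ}
    (hTd : Td ⊆ Icc 0 T) {V : ℝ → ℝ} (hV : LipschitzOnWith L V (Icc 0 1)) (hVmin : 0 < Vmin)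
    (hVminV : ∀ c ∈ Icc 0 1, Vmin ≤ V c) (α β γ : ℝ)
    {𝓕 : Set (ProbabilityMeasure (ℝ × ℝ))}
    (h𝓕 : ∀ F ∈ 𝓕, (F : Measure (ℝ × ℝ)) (Td ×ˢ Xs)ᶜ = 0 ∧
      (F : Measure (ℝ × ℝ)) ≤ G • volume)
    {zsol : ProbabilityMeasure (ℝ × ℝ) → ℝ → ℝ} {Tt : ProbabilityMeasure (ℝ × ℝ) → ℝ → ℝ → ℝ}
    (hzsol : ∀ F ∈ 𝓕, Continuous (zsol F) ∧
      ∀ t ∈ Icc 0 T, zsol F t = Umap Td Xs V F (zsol F) t)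
    (hTt : ∀ F ∈ 𝓕, IsTravelTime Td Xs T (zsol F) (Tt F)) :
    ContinuousOn (fun p : (ℝ × ℝ × ℝ) × ProbabilityMeasure (ℝ × ℝ) =>
        tripCost α β γ p.1.1 p.1.2.2 (Tt p.2 p.1.1 p.1.2.1)) ((Td ×ˢ Xs ×ˢ Ta) ×ˢ 𝓕) ∧
      ∃ K, ∀ F ∈ 𝓕, LipschitzOnWith K (fun q : ℝ × ℝ × ℝ =>
        tripCost α β γ q.1 q.2.2 (Tt F q.1 q.2.1)) (Td ×ˢ Xs ×ˢ Ta) := by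
  lift Vmin to ℝ≥0 using hVmin.le
  obtain ⟨M, hM⟩ := isCompact_Icc.exists_bound_of_continuousOn hV.continuousOn
  obtain ⟨K, hK⟩ := exists_lipschitzWith_tripCost α β γ
  have hz : ∀ F ∈ 𝓕, IsTravelDistance V T F (zsol F) := fun F hF =>
    isTravelDistance_of_eq_Umap (h𝓕 F hF).1 (hzsol F hF).1 (hzsol F hF).2
  have hanti := fun F hF => (hz F hF).antilipschitzWith hV.continuousOn hVmin hVminV
  have hlip : ∀ F ∈ 𝓕, LipschitzOnWith M.toNNReal (zsol F) (Icc 0 T) := fun F hF =>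
    (hz F hF).lipschitzOnWith hV.continuousOn fun c hc => (hM c hc).trans M.le_coe_toNNReal
  have hcost : ∀ F ∈ 𝓕, LipschitzOnWith _ (fun q : ℝ × ℝ × ℝ =>
      tripCost α β γ q.1 q.2.2 (Tt F q.1 q.2.1)) (Td ×ˢ Xs ×ˢ Ta) := fun F hF =>
    hK.comp_lipschitzOnWith (LipschitzOnWith.prodMk LipschitzWith.id.lipschitzOnWith
      (((hTt F hF).lipschitzOnWith hTd (hanti F hF) (hlip F hF)).comp
        (LipschitzWith.prod_fst.prodMk
          (LipschitzWith.prod_fst.comp LipschitzWith.prod_snd)).lipschitzOnWith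
        fun q hq => ⟨hq.1, hq.2.1⟩))
  refine ⟨continuousOn_prod_of_continuousOn_lipschitzOnWith _ _ (fun q hq => ?_) hcost, _, hcost⟩
  exact hK.continuous.comp_continuousOn (continuousOn_const.prodMk
    (continuousOn_travelTime hTt hTd hanti (fun t ht => continuousOn_travelDistance hV
      (fun F hF => (h𝓕 F hF).2) hz ht) hq.1 hq.2.1))

/-- Proposition 5: joint continuity and Lipschitz continuity of the
cost function. Suppose `V` is Lipschitz with `0 < Vmin ≤ V ≤ Vmax`, for each
`F ∈ 𝒫_{m,G}` the characteristic travel distance `zsol F` solves the fixed-point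
equation, and the travel time `Tt F t_d x` is characterized by
`t_d + Tt F t_d x ∈ 𝒯` and `zsol F (t_d + Tt F t_d x) = x + zsol F t_d`
(all trips complete within the horizon). Then the cost
`J(t_d; x, t_a; F) = α·T_F(t_d,x) + β·(t_a − t_d − T_F(t_d,x))₊ + γ·(t_d + T_F(t_d,x) − t_a)₊`
is jointly continuous on `𝒯_d × 𝒳 × 𝒯_a × 𝒫_{m,G}` (with the weak topology on
`𝒫_{m,G}`), and for each fixed `F ∈ 𝒫_{m,G}` it is Lipschitz in `(t_d, x, t_a)`
with a Lipschitz constant independent of `F`. -/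
theorem cost_jointly_continuous_and_Lipschitz
    (Tmax Xmin Xmax G : ℝ) (hT : 0 < Tmax) (hXmin : 0 < Xmin) (hXX : Xmin < Xmax)
    (hG : 0 < G)
    (Td Ta : Set ℝ) (hTdc : IsCompact Td) (hTd : Td ⊆ Set.Icc 0 Tmax)
    (hTac : IsCompact Ta) (hTa : Ta ⊆ Set.Icc 0 Tmax)
    (m : Measure (ℝ × ℝ)) (hm : IsProbabilityMeasure m)
    (V : ℝ → ℝ) (LV : NNReal) (hV : LipschitzOnWith LV V (Set.Ici 0))
    (Vmin Vmax : ℝ) (hVmin : 0 < Vmin)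
    (hVbd : ∀ c : ℝ, 0 ≤ c → Vmin ≤ V c ∧ V c ≤ Vmax)
    (α β γ : ℝ) (hα : 0 < α) (hβ : 0 < β) (hγ : 0 < γ)
    (zsol : ProbabilityMeasure (ℝ × ℝ) → ℝ → ℝ)
    (Tt : ProbabilityMeasure (ℝ × ℝ) → ℝ → ℝ → ℝ)
    (hzsol : ∀ F : ProbabilityMeasure (ℝ × ℝ),
      memP Td (Set.Icc Xmin Xmax) Ta m G (F : Measure (ℝ × ℝ)) →
      Continuous (zsol F) ∧
        ∀ t ∈ Set.Icc (0:ℝ) Tmax,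
          zsol F t = Umap Td (Set.Icc Xmin Xmax) V (F : Measure (ℝ × ℝ)) (zsol F) t)
    (hTt : ∀ F : ProbabilityMeasure (ℝ × ℝ),
      memP Td (Set.Icc Xmin Xmax) Ta m G (F : Measure (ℝ × ℝ)) →
      ∀ td ∈ Td, ∀ x ∈ Set.Icc Xmin Xmax,
        td + Tt F td x ∈ Set.Icc (0:ℝ) Tmax ∧
          zsol F (td + Tt F td x) = x + zsol F td) :
    ContinuousOn
      (fun p : (ℝ × ℝ × ℝ) × ProbabilityMeasure (ℝ × ℝ) =>
        α * Tt p.2 p.1.1 p.1.2.1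
          + β * max (p.1.2.2 - p.1.1 - Tt p.2 p.1.1 p.1.2.1) 0
          + γ * max (p.1.1 + Tt p.2 p.1.1 p.1.2.1 - p.1.2.2) 0)
      ((Td ×ˢ Set.Icc Xmin Xmax ×ˢ Ta) ×ˢ
        {F : ProbabilityMeasure (ℝ × ℝ) |
          memP Td (Set.Icc Xmin Xmax) Ta m G (F : Measure (ℝ × ℝ))}) ∧
    ∃ K : NNReal, ∀ F : ProbabilityMeasure (ℝ × ℝ),
      memP Td (Set.Icc Xmin Xmax) Ta m G (F : Measure (ℝ × ℝ)) →
      LipschitzOnWith K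
        (fun q : ℝ × ℝ × ℝ =>
          α * Tt F q.1 q.2.1
            + β * max (q.2.2 - q.1 - Tt F q.1 q.2.1) 0
            + γ * max (q.1 + Tt F q.1 q.2.1 - q.2.2) 0)
        (Td ×ˢ Set.Icc Xmin Xmax ×ˢ Ta) := by
  exact cost_jointly_continuous_and_Lipschitz_general (G := G.toNNReal) hTd
    (hV.mono Icc_subset_Ici_self) hVmin (fun c hc => (hVbd c hc.1).1) α β γ
    (fun F hF => ⟨hF.2.1, Measure.le_iff.2 hF.2.2.1⟩) hzsol hTt
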